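/- Let Γ be a connected bipartite (δ_1,δ_2)-semiregular graph on n = n_1 + n_2 vertices with d+1 distinct eigenvalues, where d is even and m(0) ≠ |n_1 − n_2|. Then Γ is distance-biregular if and only if the single condition k̄_{1,d} + k̄_{2,d} = p_{1,d}(λ_0) + p_{2,d}(λ_0) holds. -/

import Mathlib

open Polynomial Finset Matrix

/-- The discrete scalar product `⟨f,g⟩ = ∑_{i∈s} w i · f(λ i) · g(λ i)` on a mesh. -/
def discInner (s : Finset ℕ) (lam w : ℕ → ℝ) (f g : Polynomial ℝ) : ℝ :=
  ∑ i ∈ s, w i * f.eval (lam i) * g.eval (lam i)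

/-- `Γ_i(u)`: the set of vertices at distance `i` from `u`. -/
noncomputable def sphere {V : Type*} [Fintype V] [DecidableEq V] (G : SimpleGraph V)
    (u : V) (i : ℕ) : Finset V :=
  Finset.univ.filter (fun v => G.dist u v = i)

/-- `Γ` (bipartite with stable sets `V₁, V₂`) is distance-biregular: it is
distance-regular around each vertex, and the intersection numbers
`c_i(u,v) = |Γ_{i−1}(u)∩Γ(v)|` and `b_i(u,v) = |Γ_{i+1}(u)∩Γ(v)|` (for `v ∈ Γ_i(u)`)
depend only on `i` and on the stable set containing `u`. -/
def IsDistBiregularOn {V : Type*} [Fintype V] [DecidableEq V] (G : SimpleGraph V)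
    [DecidableRel G.Adj] (V1 V2 : Finset V) : Prop :=
  ∃ c1 b1 c2 b2 : ℕ → ℕ,
    (∀ u ∈ V1, ∀ v : V,
      (sphere G u (G.dist u v - 1) ∩ G.neighborFinset v).card = c1 (G.dist u v) ∧
      (sphere G u (G.dist u v + 1) ∩ G.neighborFinset v).card = b1 (G.dist u v)) ∧
    (∀ u ∈ V2, ∀ v : V,
      (sphere G u (G.dist u v - 1) ∩ G.neighborFinset v).card = c2 (G.dist u v) ∧
      (sphere G u (G.dist u v + 1) ∩ G.neighborFinset v).card = b2 (G.dist u v))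

/-!
Write `A` for the adjacency matrix and `S` for one of the stable sets. By orthogonality `∑ⱼ pⱼ`
takes the value `1 / w₀` at `λ₀` and vanishes at the other eigenvalues, so `∑ⱼ pⱼ(A) = w₀⁻¹ E₀`,
and by Perron-Frobenius its entry at `(u, v)` with `u ∈ S` is `√(deg v) / √(deg u)`. As
`deg pⱼ = j`, only `p_d` contributes at distance `d`, and for even `d` the entries of `p_d(A)`
there are `1`. The mean over the rows in `S` of the squared norms of the rows of `p_d(A)` is
`‖p_d‖² = p_d(λ₀)`, whence `p_d(λ₀) = k̄_d + (mean of the sums of the squares of the entries not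
at distance d)`.

So `k̄_d ≤ p_d(λ₀)`, with equality iff `p_d(A)` is supported at distance `d` on the rows in `S`.
If `Γ` is distance-regular around `S`, then `p_d(A)` is a function of the distance on these rows
and orthogonality to `1, X, …, X^(d-1)` removes the entries at smaller distances. Conversely, the
support property descends from `p_d` to all `pⱼ`, and the entries of `pⱼ(A) A` then count
neighbours. Adding the two inequalities gives the single condition. The assumption on `m(0)` makes
all the weights positive: `∑_{u ∈ V₁} m_u(λᵢ) - ∑_{v ∈ V₂} m_v(λᵢ)` is `0` for `λᵢ ≠ 0` and
`n₁ - n₂` for `λᵢ = 0`.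
-/

/-! ### Predistance polynomials -/

theorem exists_eq_sum_smul_of_degree_eq {K : Type*} [Field K] {m : ℕ} {p : ℕ → K[X]}
    (hp : ∀ i < m, (p i).degree = i) {f : K[X]} (hf : f.degree < m) :
    ∃ c : ℕ → K, f = ∑ j ∈ range m, c j • p j := by
  let P : Polynomial.Sequence K :=
    ⟨fun i => if i < m then p i else X ^ i, fun i => by
      split_ifs with hi
      exacts [hp i hi, degree_X_pow i]⟩
  have hspan : Submodule.span K (P '' (range m : Set ℕ)) = degreeLT K m := by
    rw [coe_range]
    exact P.span_degreeLT fun i _ => (leadingCoeff_ne_zero.2 (P.ne_zero i)).isUnit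
  rw [← mem_degreeLT, ← hspan, Submodule.mem_span_image_finset_iff_exists_fun'] at hf
  obtain ⟨c, rfl⟩ := hf
  exact ⟨c, sum_congr rfl fun j hj => congrArg (c j • ·) (if_pos (mem_range.1 hj))⟩

section DiscInner

variable {s : Finset ℕ} {lam w : ℕ → ℝ}

theorem discInner_comm (f g : ℝ[X]) : discInner s lam w f g = discInner s lam w g f :=
  sum_congr rfl fun _ _ => by ring

theorem discInner_congr_right {f g h : ℝ[X]}
    (hgh : ∀ i ∈ s, g.eval (lam i) = h.eval (lam i)) :
    discInner s lam w f g = discInner s lam w f h :=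
  sum_congr rfl fun i hi => by rw [hgh i hi]

theorem discInner_sum_smul_right {ι : Type*} (t : Finset ι) (c : ι → ℝ) (f : ℝ[X])
    (g : ι → ℝ[X]) :
    discInner s lam w f (∑ j ∈ t, c j • g j) = ∑ j ∈ t, c j * discInner s lam w f (g j) := by
  simp only [discInner, eval_finsetSum, eval_smul, smul_eq_mul, mul_sum]
  rw [sum_comm]
  exact sum_congr rfl fun _ _ => sum_congr rfl fun _ _ => by ring

theorem discInner_sum_left {ι : Type*} (t : Finset ι) (f : ι → ℝ[X]) (g : ℝ[X]) :
    discInner s lam w (∑ j ∈ t, f j) g = ∑ j ∈ t, discInner s lam w (f j) g := by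
  simp only [discInner, eval_finsetSum, mul_sum, sum_mul]
  exact sum_comm

theorem discInner_X_mul_right (f g : ℝ[X]) :
    discInner s lam w f (X * g) = discInner s lam w (X * f) g :=
  sum_congr rfl fun _ _ => by simp only [eval_mul, eval_X]; ring

theorem discInner_lagrangeBasis_right (hlam : Set.InjOn lam s) {k : ℕ} (hk : k ∈ s) (f : ℝ[X]) :
    discInner s lam w f (Lagrange.basis s lam k) = w k * f.eval (lam k) := by
  rw [discInner, sum_eq_single_of_mem k hk, Lagrange.eval_basis_self hlam hk, mul_one]
  intro j hj hjk
  rw [Lagrange.eval_basis_of_ne hjk.symm hj, mul_zero]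

theorem discInner_self_pos (hlam : Set.InjOn lam s) (hw : ∀ i ∈ s, 0 < w i) {f : ℝ[X]}
    (hf : f ≠ 0) (hdeg : f.degree < #s) : 0 < discInner s lam w f f := by
  obtain ⟨i, hi, hfi⟩ : ∃ i ∈ s, f.eval (lam i) ≠ 0 := by
    contrapose! hf
    exact eq_zero_of_degree_lt_of_eval_index_eq_zero s hlam hdeg hf
  simp only [discInner, mul_assoc]
  exact sum_pos' (fun j hj => mul_nonneg (hw j hj).le (mul_self_nonneg _))
    ⟨i, hi, mul_pos (hw i hi) (mul_self_pos.2 hfi)⟩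

end DiscInner

/-- `p 0, …, p d` are the predistance polynomials of the discrete scalar product with weights
`w 0, …, w d > 0` on the mesh of distinct points `lam 0, …, lam d`: the orthogonal sequence with
`deg (p i) = i`, normalized by `‖p i‖² = p i (lam 0)`. -/
structure IsPredistanceSeq (d : ℕ) (lam w : ℕ → ℝ) (p : ℕ → ℝ[X]) : Prop where
  injOn : Set.InjOn lam (range (d + 1))
  weight_pos : ∀ k ∈ range (d + 1), 0 < w k
  degree_eq : ∀ i ≤ d, (p i).degree = i
  orthogonal : ∀ i ≤ d, ∀ j ≤ d, i ≠ j → discInner (range (d + 1)) lam w (p i) (p j) = 0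
  norm_sq : ∀ i ≤ d, discInner (range (d + 1)) lam w (p i) (p i) = (p i).eval (lam 0)

namespace IsPredistanceSeq

variable {d : ℕ} {lam w : ℕ → ℝ} {p : ℕ → ℝ[X]}

theorem discInner_eq_zero_of_degree_lt (hp : IsPredistanceSeq d lam w p) {i : ℕ} (hi : i ≤ d)
    {f : ℝ[X]} (hf : f.degree < i) : discInner (range (d + 1)) lam w (p i) f = 0 := by
  obtain ⟨c, rfl⟩ := exists_eq_sum_smul_of_degree_eq
    (fun j hj => hp.degree_eq j (hj.le.trans hi)) hf
  rw [discInner_sum_smul_right]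
  refine sum_eq_zero fun j hj => ?_
  have hji := mem_range.1 hj
  rw [hp.orthogonal i hi j (hji.le.trans hi) hji.ne', mul_zero]

theorem discInner_self_pos (hp : IsPredistanceSeq d lam w p) {i : ℕ} (hi : i ≤ d) :
    0 < discInner (range (d + 1)) lam w (p i) (p i) := by
  have hdeg := hp.degree_eq i hi
  refine _root_.discInner_self_pos hp.injOn hp.weight_pos (fun h0 => ?_) ?_
  · simp [h0] at hdeg
  · rw [hdeg, card_range]
    exact_mod_cast Nat.lt_succ_of_le hi

theorem eval_eq_sum_discInner_div (hp : IsPredistanceSeq d lam w p) (f : ℝ[X]) {k : ℕ}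
    (hk : k ∈ range (d + 1)) :
    f.eval (lam k) = ∑ j ∈ range (d + 1), discInner (range (d + 1)) lam w (p j) f /
      discInner (range (d + 1)) lam w (p j) (p j) * (p j).eval (lam k) := by
  have hinterp : ∀ i ∈ range (d + 1),
      (Lagrange.interpolate (range (d + 1)) lam fun i => f.eval (lam i)).eval (lam i) =
        f.eval (lam i) := fun i hi => Lagrange.eval_interpolate_at_node _ hp.injOn hi
  obtain ⟨c, hc⟩ := exists_eq_sum_smul_of_degree_eq
    (fun i hi => hp.degree_eq i (Nat.lt_succ_iff.1 hi))
    ((Lagrange.degree_interpolate_lt (fun i => f.eval (lam i)) hp.injOn).trans_eq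
      (by rw [card_range]))
  rw [hc] at hinterp
  rw [← hinterp k hk, eval_finsetSum]
  refine sum_congr rfl fun i hi => ?_
  have hi' := mem_range_succ_iff.1 hi
  rw [← discInner_congr_right hinterp, discInner_sum_smul_right, sum_eq_single_of_mem i hi,
    mul_div_cancel_right₀ _ (hp.discInner_self_pos hi').ne', eval_smul, smul_eq_mul]
  intro j hj hji
  rw [hp.orthogonal i hi' j (mem_range_succ_iff.1 hj) hji.symm, mul_zero]

theorem discInner_sum_eq_eval (hp : IsPredistanceSeq d lam w p) (f : ℝ[X]) :
    discInner (range (d + 1)) lam w (∑ j ∈ range (d + 1), p j) f = f.eval (lam 0) := by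
  rw [hp.eval_eq_sum_discInner_div f (mem_range.2 d.succ_pos), discInner_sum_left]
  refine sum_congr rfl fun j hj => ?_
  have hj' := mem_range_succ_iff.1 hj
  rw [← hp.norm_sq j hj', div_mul_cancel₀ _ (hp.discInner_self_pos hj').ne']

theorem weight_mul_eval_sum (hp : IsPredistanceSeq d lam w p) {k : ℕ} (hk : k ∈ range (d + 1)) :
    w k * (∑ j ∈ range (d + 1), p j).eval (lam k) = if k = 0 then 1 else 0 := by
  rw [← discInner_lagrangeBasis_right hp.injOn hk, hp.discInner_sum_eq_eval]
  split_ifs with hk0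
  · rw [hk0] at hk ⊢
    exact Lagrange.eval_basis_self hp.injOn hk
  · exact Lagrange.eval_basis_of_ne hk0 (mem_range.2 d.succ_pos)

theorem discInner_ne_zero_of_degree_eq (hp : IsPredistanceSeq d lam w p) {i : ℕ} (hi : i ≤ d)
    {f : ℝ[X]} (hf : f.degree = i) : discInner (range (d + 1)) lam w (p i) f ≠ 0 := by
  have hdeg : ∀ j < i + 1, (Function.update p i f j).degree = j := fun j hj => by
    obtain rfl | hji := eq_or_ne j i
    · rwa [Function.update_self]
    · rw [Function.update_of_ne hji]
      exact hp.degree_eq j (by omega)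
  obtain ⟨c, hc⟩ := exists_eq_sum_smul_of_degree_eq (f := p i) hdeg
    ((hp.degree_eq i hi).trans_lt (by exact_mod_cast i.lt_succ_self))
  intro h0
  refine (hp.discInner_self_pos hi).ne' ?_
  nth_rewrite 2 [hc]
  rw [discInner_sum_smul_right]
  refine sum_eq_zero fun j hj => mul_eq_zero_of_right _ ?_
  obtain rfl | hji := eq_or_ne j i
  · rwa [Function.update_self]
  · rw [Function.update_of_ne hji]
    have hj' := mem_range_succ_iff.1 hj
    exact hp.orthogonal i hi j (hj'.trans hi) hji.symm

theorem degree_X_mul (hp : IsPredistanceSeq d lam w p) {i : ℕ} (hi : i ≤ d) :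
    (X * p i).degree = ((i + 1 : ℕ) : WithBot ℕ) := by
  rw [X_mul, degree_mul_X, hp.degree_eq i hi, Nat.cast_succ]

end IsPredistanceSeq

/-! ### Spectral idempotents -/

/-- The mean over `S` of the local multiplicities `m_u(λ_i) = (E i) u u`. -/
noncomputable def meanLocalMult {V : Type*} (E : ℕ → Matrix V V ℝ) (S : Finset V) (i : ℕ) : ℝ :=
  (∑ u ∈ S, E i u u) / S.card

theorem nonempty_of_meanLocalMult_pos {V : Type*} {E : ℕ → Matrix V V ℝ} {S : Finset V}
    {i : ℕ} (h : 0 < meanLocalMult E S i) : S.Nonempty := by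
  rw [nonempty_iff_ne_empty]
  rintro rfl
  simp [meanLocalMult] at h

/-- `A` has the distinct eigenvalues `lam 0 > ⋯ > lam d`, with spectral idempotents
`E 0, …, E d`. -/
structure IsSpectralResolution {V : Type*} [Fintype V] [DecidableEq V] (A : Matrix V V ℝ) (d : ℕ)
    (lam : ℕ → ℝ) (E : ℕ → Matrix V V ℝ) : Prop where
  strictAntiOn : StrictAntiOn lam (Set.Iic d)
  isSymm : ∀ i ≤ d, (E i).IsSymm
  sum_eq_one : ∑ i ∈ range (d + 1), E i = 1
  mul_eq_ite : ∀ i ≤ d, ∀ j ≤ d, E i * E j = if i = j then E i else 0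
  mul_idempotent : ∀ i ≤ d, A * E i = lam i • E i
  ne_zero : ∀ i ≤ d, E i ≠ 0

namespace IsSpectralResolution

variable {V : Type*} [Fintype V] [DecidableEq V] {A : Matrix V V ℝ} {d : ℕ} {lam : ℕ → ℝ}
  {E : ℕ → Matrix V V ℝ}

theorem injOn (h : IsSpectralResolution A d lam E) : Set.InjOn lam (range (d + 1)) :=
  h.strictAntiOn.injOn.mono fun _ hi => mem_range_succ_iff.1 hi

theorem idempotent_mul (h : IsSpectralResolution A d lam E) (hA : A.IsSymm) {i : ℕ} (hi : i ≤ d) :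
    E i * A = lam i • E i := by
  have := congrArg transpose (h.mul_idempotent i hi)
  rwa [transpose_mul, transpose_smul, hA, h.isSymm i hi] at this

theorem exists_eigenvalue_eq (h : IsSpectralResolution A d lam E) (hA : A.IsSymm) {θ : ℝ}
    {x : V → ℝ} (hx : x ≠ 0) (hAx : A *ᵥ x = θ • x) : ∃ i ≤ d, lam i = θ := by
  obtain ⟨i, hi, hix⟩ : ∃ i ∈ range (d + 1), E i *ᵥ x ≠ 0 := by
    by_contra! hzero
    exact hx (by rw [← one_mulVec x, ← h.sum_eq_one, sum_mulVec, sum_eq_zero hzero])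
  have hi' := mem_range_succ_iff.1 hi
  refine ⟨i, hi', smul_left_injective ℝ hix ?_⟩
  calc lam i • (E i *ᵥ x) = (E i * A) *ᵥ x := by rw [h.idempotent_mul hA hi', smul_mulVec]
    _ = θ • (E i *ᵥ x) := by rw [← mulVec_mulVec, hAx, mulVec_smul]

theorem posSemidef (h : IsSpectralResolution A d lam E) {i : ℕ} (hi : i ≤ d) :
    (E i).PosSemidef := by
  have hmul : (E i)ᴴ * E i = E i := by
    rw [conjTranspose_eq_transpose_of_trivial, h.isSymm i hi, h.mul_eq_ite i hi i hi, if_pos rfl]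
  exact hmul ▸ posSemidef_conjTranspose_mul_self (E i)

theorem diag_nonneg (h : IsSpectralResolution A d lam E) {i : ℕ} (hi : i ≤ d) (u : V) :
    0 ≤ E i u u :=
  (h.posSemidef hi).diag_nonneg

theorem trace_pos (h : IsSpectralResolution A d lam E) {i : ℕ} (hi : i ≤ d) :
    0 < (E i).trace :=
  (h.posSemidef hi).trace_nonneg.lt_of_ne' fun h0 =>
    h.ne_zero i hi ((h.posSemidef hi).trace_eq_zero_iff.1 h0)

theorem aeval_mul_idempotent (h : IsSpectralResolution A d lam E) (f : ℝ[X]) {i : ℕ}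
    (hi : i ≤ d) : aeval A f * E i = f.eval (lam i) • E i := by
  have hpow : ∀ k : ℕ, A ^ k * E i = lam i ^ k • E i := by
    intro k
    induction k with
    | zero => simp
    | succ k ih =>
      rw [pow_succ, mul_assoc, h.mul_idempotent i hi, mul_smul_comm, ih, smul_smul, pow_succ']
  rw [aeval_eq_sum_range, eval_eq_sum_range, sum_mul, sum_smul]
  exact sum_congr rfl fun k _ => by rw [smul_mul_assoc, hpow, smul_smul]

theorem aeval_eq_sum (h : IsSpectralResolution A d lam E) (f : ℝ[X]) :
    aeval A f = ∑ i ∈ range (d + 1), f.eval (lam i) • E i := by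
  rw [← mul_one (aeval A f), ← h.sum_eq_one, mul_sum]
  exact sum_congr rfl fun i hi => h.aeval_mul_idempotent f (mem_range_succ_iff.1 hi)

theorem aeval_isSymm (h : IsSpectralResolution A d lam E) (f : ℝ[X]) : (aeval A f).IsSymm := by
  rw [h.aeval_eq_sum, IsSymm, transpose_sum]
  exact sum_congr rfl fun i hi => by
    rw [transpose_smul, h.isSymm i (mem_range_succ_iff.1 hi)]

theorem sum_aeval_mul_aeval (h : IsSpectralResolution A d lam E) (S : Finset V) (f g : ℝ[X]) :
    ∑ u ∈ S, ∑ v, aeval A f u v * aeval A g u v =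
      S.card * discInner (range (d + 1)) lam (meanLocalMult E S) f g := by
  have hrow : ∀ u, ∑ v, aeval A f u v * aeval A g u v =
      ∑ i ∈ range (d + 1), f.eval (lam i) * g.eval (lam i) * E i u u := fun u => by
    simp_rw [← (h.aeval_isSymm g).apply u, ← mul_apply, ← map_mul, h.aeval_eq_sum, eval_mul,
      Matrix.sum_apply, Matrix.smul_apply, smul_eq_mul]
  have hweight : ∀ i, S.card * meanLocalMult E S i = ∑ u ∈ S, E i u u := fun i =>
    mul_div_cancel_of_imp' fun hS => by
      rw [card_eq_zero.1 (Nat.cast_eq_zero.1 hS), sum_empty]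
  simp_rw [hrow]
  rw [sum_comm, discInner, mul_sum]
  refine sum_congr rfl fun i _ => ?_
  rw [← mul_sum, ← hweight]
  ring

variable {w : ℕ → ℝ} {p : ℕ → ℝ[X]}

theorem aeval_eq_sum_discInner_div (h : IsSpectralResolution A d lam E)
    (hp : IsPredistanceSeq d lam w p) (f : ℝ[X]) :
    aeval A f = ∑ j ∈ range (d + 1), (discInner (range (d + 1)) lam w (p j) f /
      discInner (range (d + 1)) lam w (p j) (p j)) • aeval A (p j) := by
  simp_rw [h.aeval_eq_sum, smul_sum]
  rw [sum_comm]
  refine sum_congr rfl fun k hk => ?_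
  rw [hp.eval_eq_sum_discInner_div f hk, sum_smul]
  exact sum_congr rfl fun j _ => (smul_smul _ _ _).symm

theorem aeval_sum_eq_inv_smul (h : IsSpectralResolution A d lam E)
    (hp : IsPredistanceSeq d lam w p) :
    aeval A (∑ j ∈ range (d + 1), p j) = (w 0)⁻¹ • E 0 := by
  have hzero : 0 ∈ range (d + 1) := mem_range.2 d.succ_pos
  have heval : ∀ k ∈ range (d + 1), (∑ j ∈ range (d + 1), p j).eval (lam k) =
      (w k)⁻¹ * if k = 0 then 1 else 0 := fun k hk => by
    rw [← hp.weight_mul_eval_sum hk, inv_mul_cancel_left₀ (hp.weight_pos k hk).ne']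
  rw [h.aeval_eq_sum, sum_eq_single_of_mem 0 hzero, heval 0 hzero, if_pos rfl, mul_one]
  intro k hk hk0
  rw [heval k hk, if_neg hk0, mul_zero, zero_smul]

end IsSpectralResolution

/-! ### The Perron vector -/

section Perron

variable {V : Type*} [Fintype V] {G : SimpleGraph V} [DecidableRel G.Adj] {θ μ : ℝ}
  {f ν : V → ℝ}

theorem adjMatrix_mulVec_sqrt_degree {c : ℕ}
    (hc : ∀ u v, G.Adj u v → G.degree u * G.degree v = c) :
    G.adjMatrix ℝ *ᵥ (fun u => √(G.degree u)) = √c • fun u => √(G.degree u : ℝ) := by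
  ext u
  have hadj : ∀ v ∈ G.neighborFinset u, √(G.degree v) = √c / √(G.degree u) := fun v hv => by
    have huv := (G.mem_neighborFinset u v).1 hv
    rw [eq_div_iff (Real.sqrt_pos.2 (Nat.cast_pos.2 (G.degree_pos_iff_exists_adj u |>.2
      ⟨v, huv⟩))).ne', ← Real.sqrt_mul (Nat.cast_nonneg _), mul_comm, ← hc u v huv, Nat.cast_mul]
  calc (G.adjMatrix ℝ *ᵥ fun u => √(G.degree u)) u
      = ∑ v ∈ G.neighborFinset u, √(G.degree v) := G.adjMatrix_mulVec_apply u _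
    _ = √c * (G.degree u / √(G.degree u)) := by
      rw [sum_congr rfl hadj, sum_const, G.card_neighborFinset_eq_degree, nsmul_eq_mul]
      ring
    _ = √c * √(G.degree u) := by rw [Real.div_sqrt]

theorem eq_mul_of_adj_of_forall_le_mul (hν : G.adjMatrix ℝ *ᵥ ν = θ • ν)
    (hf : G.adjMatrix ℝ *ᵥ f = μ • f) (hθμ : θ ≤ μ) (hpos : ∀ v, 0 < ν v) {M : ℝ} (hM : 0 ≤ M)
    (hle : ∀ v, f v ≤ M * ν v) {u v : V} (huv : G.Adj u v) (hu : f u = M * ν u) :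
    f v = M * ν v := by
  have hν_u : ∑ x ∈ G.neighborFinset u, ν x = θ * ν u :=
    (G.adjMatrix_mulVec_apply u ν).symm.trans (congrFun hν u)
  have hf_u : ∑ x ∈ G.neighborFinset u, f x = μ * f u :=
    (G.adjMatrix_mulVec_apply u f).symm.trans (congrFun hf u)
  have hdefect : ∑ x ∈ G.neighborFinset u, (M * ν x - f x) ≤ 0 := by
    calc ∑ x ∈ G.neighborFinset u, (M * ν x - f x) = (θ - μ) * (M * ν u) := by
          rw [sum_sub_distrib, ← mul_sum, hν_u, hf_u, hu]; ring
      _ ≤ 0 := mul_nonpos_of_nonpos_of_nonneg (sub_nonpos.2 hθμ) (mul_nonneg hM (hpos u).le)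
  have hnonneg : ∀ x ∈ G.neighborFinset u, 0 ≤ M * ν x - f x := fun x _ => sub_nonneg.2 (hle x)
  have hzero := (sum_eq_zero_iff_of_nonneg hnonneg).1 (hdefect.antisymm (sum_nonneg hnonneg))
  exact (sub_eq_zero.1 (hzero v ((G.mem_neighborFinset u v).2 huv))).symm

theorem exists_eq_smul_of_adjMatrix_mulVec (hconn : G.Connected)
    (hν : G.adjMatrix ℝ *ᵥ ν = θ • ν) (hf : G.adjMatrix ℝ *ᵥ f = μ • f) (hθμ : θ ≤ μ)
    (hpos : ∀ v, 0 < ν v) : ∃ M : ℝ, f = M • ν := by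
  have := hconn.nonempty
  obtain ⟨u, -, hmax⟩ := exists_max_image univ (fun v => |f v| / ν v) univ_nonempty
  wlog hu : 0 ≤ f u generalizing f
  · obtain ⟨M, hM⟩ := this (f := -f) (by rw [mulVec_neg, hf, smul_neg])
      (fun v hv => by simpa using hmax v hv) (by simpa using (not_le.1 hu).le)
    exact ⟨-M, by rw [neg_smul, ← hM, neg_neg]⟩
  refine ⟨f u / ν u, funext fun v => ?_⟩
  have hle : ∀ x, f x ≤ f u / ν u * ν x := fun x => by
    have hx := hmax x (mem_univ x)
    rw [abs_of_nonneg hu] at hx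
    exact (le_abs_self _).trans ((div_le_iff₀ (hpos x)).1 hx)
  obtain ⟨q⟩ := hconn u v
  have hspread : ∀ {x y : V}, G.Walk x y → f x = f u / ν u * ν x → f y = f u / ν u * ν y := by
    intro x y q
    induction q with
    | nil => exact id
    | cons hadj _ ih =>
      exact fun hx => ih (eq_mul_of_adj_of_forall_le_mul hν hf hθμ hpos
        (div_nonneg hu (hpos u).le) hle hadj hx)
  exact hspread q (div_mul_cancel₀ _ (hpos u).ne').symm

variable [DecidableEq V] {d : ℕ} {lam : ℕ → ℝ} {E : ℕ → Matrix V V ℝ}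

namespace IsSpectralResolution

theorem idempotent_zero_mul_eq (h : IsSpectralResolution (G.adjMatrix ℝ) d lam E)
    (hconn : G.Connected) (hν : G.adjMatrix ℝ *ᵥ ν = θ • ν) (hpos : ∀ v, 0 < ν v) (u v x : V) :
    E 0 u v * ν x = E 0 u x * ν v := by
  have hθ : θ ≤ lam 0 := by
    obtain ⟨i, hi, rfl⟩ := h.exists_eigenvalue_eq G.isSymm_adjMatrix
      (fun h0 => (hpos u).ne' (congrFun h0 u)) hν
    exact h.strictAntiOn.antitoneOn d.zero_le hi i.zero_le
  have hrow : G.adjMatrix ℝ *ᵥ E 0 u = lam 0 • E 0 u := by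
    have := congrFun (h.idempotent_mul G.isSymm_adjMatrix d.zero_le) u
    rwa [mul_apply_eq_vecMul, ← mulVec_transpose, G.isSymm_adjMatrix] at this
  obtain ⟨M, hM⟩ := exists_eq_smul_of_adjMatrix_mulVec hconn hν hrow hθ hpos
  simp only [hM, Pi.smul_apply, smul_eq_mul]
  ring

theorem aeval_sum_predistance_apply {p : ℕ → ℝ[X]} {S : Finset V}
    (h : IsSpectralResolution (G.adjMatrix ℝ) d lam E) (hconn : G.Connected)
    (hν : G.adjMatrix ℝ *ᵥ ν = θ • ν) (hpos : ∀ v, 0 < ν v)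
    (hp : IsPredistanceSeq d lam (meanLocalMult E S) p)
    (hS : ∀ u ∈ S, ∀ v ∈ S, ν u = ν v) {u : V} (hu : u ∈ S) (v : V) :
    aeval (G.adjMatrix ℝ) (∑ j ∈ range (d + 1), p j) u v = ν v / ν u := by
  have hrow := h.idempotent_zero_mul_eq hconn hν hpos
  have hdiag : ∀ x ∈ S, E 0 x x = E 0 u u := fun x hx => by
    refine mul_right_cancel₀ (hpos u).ne' ?_
    calc E 0 x x * ν u = E 0 x u * ν x := hrow x x u
      _ = E 0 u x * ν u := by rw [(h.isSymm 0 d.zero_le).apply, hS x hx u hu]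
      _ = E 0 u u * ν x := hrow u x u
      _ = E 0 u u * ν u := by rw [hS x hx u hu]
  have hcard : (S.card : ℝ) ≠ 0 := Nat.cast_ne_zero.2 (card_ne_zero_of_mem hu)
  have hw0 : meanLocalMult E S 0 = E 0 u u := by
    rw [meanLocalMult, sum_congr rfl hdiag, sum_const, nsmul_eq_mul, mul_div_cancel_left₀ _ hcard]
  have hE : 0 < E 0 u u := hw0 ▸ hp.weight_pos 0 (mem_range.2 d.succ_pos)
  rw [h.aeval_sum_eq_inv_smul hp, hw0, Matrix.smul_apply, smul_eq_mul, eq_div_iff (hpos u).ne',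
    mul_assoc, hrow u v u, inv_mul_cancel_left₀ hE.ne']

end IsSpectralResolution

end Perron

/-! ### Distances and powers of the adjacency matrix -/

/-- On the rows indexed by `S`, the entries of `M` depend only on the distance. -/
def IsDistInvariantOn {V : Type*} (G : SimpleGraph V) (S : Finset V)
    (M : Matrix V V ℝ) : Prop :=
  ∃ F : ℕ → ℝ, ∀ u ∈ S, ∀ v, M u v = F (G.dist u v)

/-- On the rows indexed by `S`, the nonzero entries of `M` are at pairs of vertices at distance
`i`. -/
def IsSupportedAtDist {V : Type*} (G : SimpleGraph V) (S : Finset V) (i : ℕ)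
    (M : Matrix V V ℝ) : Prop :=
  ∀ u ∈ S, ∀ v, G.dist u v ≠ i → M u v = 0

theorem dist_ne_of_adj_of_isBipartite {V : Type*} {G : SimpleGraph V} (hconn : G.Connected)
    (hG : G.IsBipartite) (u : V) {v w : V} (h : G.Adj v w) : G.dist u v ≠ G.dist u w := by
  intro heq
  obtain ⟨q, hq⟩ := hconn.exists_walk_length_eq_dist u v
  obtain ⟨r, hr⟩ := hconn.exists_walk_length_eq_dist w u
  have heven := SimpleGraph.two_colorable_iff_forall_loop_even.1 hG u (q.append (.cons h r))
  rw [SimpleGraph.Walk.length_append, SimpleGraph.Walk.length_cons, hq, hr, G.dist_comm (u := w),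
    heq, ← add_assoc, ← two_mul] at heven
  exact Nat.not_even_two_mul_add_one _ heven

section Distance

variable {V : Type*} [Fintype V] [DecidableEq V] {G : SimpleGraph V} [DecidableRel G.Adj]

theorem adjMatrix_pow_apply_eq_zero_of_lt_dist {R : Type*} [Semiring R] {k : ℕ} {u v : V}
    (h : k < G.dist u v) : (G.adjMatrix R ^ k) u v = 0 := by
  rw [SimpleGraph.adjMatrix_pow_apply_eq_card_walk]
  have : IsEmpty {q : G.Walk u v | q.length = k} :=
    ⟨fun q => (G.dist_le q.1).not_gt (by rw [q.2]; exact h)⟩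
  rw [Fintype.card_eq_zero, Nat.cast_zero]

theorem adjMatrix_pow_dist_pos (hconn : G.Connected) (u v : V) :
    0 < (G.adjMatrix ℝ ^ G.dist u v) u v := by
  obtain ⟨q, hq⟩ := hconn.exists_walk_length_eq_dist u v
  rw [SimpleGraph.adjMatrix_pow_apply_eq_card_walk, Nat.cast_pos, Fintype.card_pos_iff]
  exact ⟨⟨q, hq⟩⟩

theorem aeval_adjMatrix_apply_eq_zero_of_degree_lt_dist {R : Type*} [CommSemiring R] {f : R[X]}
    {u v : V} (h : f.degree < G.dist u v) : aeval (G.adjMatrix R) f u v = 0 := by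
  rw [aeval_eq_sum_range, Matrix.sum_apply]
  refine sum_eq_zero fun k _ => ?_
  rw [Matrix.smul_apply]
  obtain hk | hk := lt_or_ge k (G.dist u v)
  · rw [adjMatrix_pow_apply_eq_zero_of_lt_dist hk, smul_zero]
  · rw [(degree_lt_iff_coeff_zero _ _).1 h k hk, zero_smul]

/-- `G` is distance-regular around each vertex of `S`, with a common intersection array. -/
def IsDistRegularAround (G : SimpleGraph V) [DecidableRel G.Adj] (S : Finset V) : Prop :=
  ∃ c b : ℕ → ℕ, ∀ u ∈ S, ∀ v : V,
    (sphere G u (G.dist u v - 1) ∩ G.neighborFinset v).card = c (G.dist u v) ∧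
    (sphere G u (G.dist u v + 1) ∩ G.neighborFinset v).card = b (G.dist u v)

theorem isDistBiregularOn_iff {S T : Finset V} :
    IsDistBiregularOn G S T ↔ IsDistRegularAround G S ∧ IsDistRegularAround G T :=
  ⟨fun ⟨c1, b1, c2, b2, h1, h2⟩ => ⟨⟨c1, b1, h1⟩, ⟨c2, b2, h2⟩⟩,
    fun ⟨⟨c1, b1, h1⟩, ⟨c2, b2, h2⟩⟩ => ⟨c1, b1, c2, b2, h1, h2⟩⟩

/-- At `u = v` the truncated `G.dist u v - 1` is `0`, and its term vanishes since `u` is not a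
neighbour of itself. -/
theorem sum_neighborFinset_eq_add {R : Type*} [NonAssocSemiring R] (hconn : G.Connected)
    (hG : G.IsBipartite) (u v : V) (F : ℕ → R) :
    ∑ w ∈ G.neighborFinset v, F (G.dist u w) =
      #(sphere G u (G.dist u v - 1) ∩ G.neighborFinset v) * F (G.dist u v - 1) +
      #(sphere G u (G.dist u v + 1) ∩ G.neighborFinset v) * F (G.dist u v + 1) := by
  have hmem : ∀ {i w}, w ∈ sphere G u i ∩ G.neighborFinset v ↔ G.dist u w = i ∧ G.Adj v w := by
    simp [sphere]
  have hunion : G.neighborFinset v = (sphere G u (G.dist u v - 1) ∩ G.neighborFinset v) ∪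
      (sphere G u (G.dist u v + 1) ∩ G.neighborFinset v) := by
    ext w
    rw [mem_union, hmem, hmem, SimpleGraph.mem_neighborFinset, ← or_and_right, iff_and_self]
    intro hvw
    have := dist_ne_of_adj_of_isBipartite hconn hG u hvw
    have := hvw.diff_dist_adj (u := u)
    omega
  have hdisj : Disjoint (sphere G u (G.dist u v - 1) ∩ G.neighborFinset v)
      (sphere G u (G.dist u v + 1) ∩ G.neighborFinset v) :=
    disjoint_left.2 fun w hw hw' => by
      have := (hmem.1 hw).1
      have := (hmem.1 hw').1
      omega
  have hpart : ∀ i, ∑ w ∈ sphere G u i ∩ G.neighborFinset v, F (G.dist u w) =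
      #(sphere G u i ∩ G.neighborFinset v) * F i := fun i => by
    rw [← nsmul_eq_mul, ← sum_const]
    exact sum_congr rfl fun w hw => by rw [(hmem.1 hw).1]
  rw [← hpart, ← hpart, ← sum_union hdisj, ← hunion]

theorem IsDistRegularAround.isDistInvariantOn_pow {S : Finset V} (hreg : IsDistRegularAround G S)
    (hconn : G.Connected) (hG : G.IsBipartite) (k : ℕ) :
    IsDistInvariantOn G S (G.adjMatrix ℝ ^ k) := by
  obtain ⟨c, b, hcb⟩ := hreg
  induction k with
  | zero =>
    refine ⟨fun i => if i = 0 then 1 else 0, fun u _ v => ?_⟩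
    rw [pow_zero, one_apply]
    exact if_congr hconn.dist_eq_zero_iff.symm rfl rfl
  | succ k ih =>
    obtain ⟨F, hF⟩ := ih
    refine ⟨fun i => c i * F (i - 1) + b i * F (i + 1), fun u hu v => ?_⟩
    rw [pow_succ, SimpleGraph.mul_adjMatrix_apply, sum_congr rfl fun w _ => hF u hu w,
      sum_neighborFinset_eq_add hconn hG, (hcb u hu v).1, (hcb u hu v).2]

theorem IsDistRegularAround.isDistInvariantOn_aeval {S : Finset V}
    (hreg : IsDistRegularAround G S) (hconn : G.Connected) (hG : G.IsBipartite) (f : ℝ[X]) :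
    IsDistInvariantOn G S (aeval (G.adjMatrix ℝ) f) := by
  choose F hF using hreg.isDistInvariantOn_pow hconn hG
  refine ⟨fun i => ∑ k ∈ range (f.natDegree + 1), f.coeff k * F k i, fun u hu v => ?_⟩
  rw [aeval_eq_sum_range, Matrix.sum_apply]
  exact sum_congr rfl fun k _ => by rw [Matrix.smul_apply, hF k u hu, smul_eq_mul]

theorem IsDistInvariantOn.eq_zero_of_sum_mul_pow_eq_zero {S : Finset V} {M : Matrix V V ℝ}
    (hM : IsDistInvariantOn G S M) (hconn : G.Connected) {j : ℕ}
    (hlow : ∀ u ∈ S, ∀ v, G.dist u v < j → M u v = 0)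
    (hsum : ∑ u ∈ S, ∑ v, M u v * (G.adjMatrix ℝ ^ j) u v = 0) {u v : V} (hu : u ∈ S)
    (huv : G.dist u v = j) : M u v = 0 := by
  obtain ⟨F, hF⟩ := hM
  have hterm : ∀ x ∈ S, ∀ y, 0 ≤ F j * (M x y * (G.adjMatrix ℝ ^ j) x y) := by
    intro x hx y
    obtain hlt | rfl | hgt := lt_trichotomy (G.dist x y) j
    · rw [hlow x hx y hlt, zero_mul, mul_zero]
    · rw [hF x hx, ← mul_assoc]
      exact mul_nonneg (mul_self_nonneg _) (adjMatrix_pow_dist_pos hconn x y).le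
    · rw [adjMatrix_pow_apply_eq_zero_of_lt_dist hgt, mul_zero, mul_zero]
  have hzero : ∑ x ∈ S, ∑ y, F j * (M x y * (G.adjMatrix ℝ ^ j) x y) = 0 := by
    simp_rw [← mul_sum, hsum, mul_zero]
  rw [sum_eq_zero_iff_of_nonneg fun x hx => sum_nonneg fun y _ => hterm x hx y] at hzero
  have huv_zero := (sum_eq_zero_iff_of_nonneg fun y _ => hterm u hu y).1 (hzero u hu) v
    (mem_univ v)
  subst huv
  rw [hF u hu, ← mul_assoc, mul_eq_zero, mul_self_eq_zero] at huv_zero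
  rw [hF u hu]
  exact huv_zero.resolve_right (adjMatrix_pow_dist_pos hconn u v).ne'

end Distance

/-! ### The spectral excess -/

/-- The mean over `S` of the number of vertices at distance `i`, i.e. `k̄_{j,i}` for `S = V_j`. -/
noncomputable def meanSphereCard {V : Type*} [Fintype V] [DecidableEq V] (G : SimpleGraph V)
    (S : Finset V) (i : ℕ) : ℝ :=
  (1 / (S.card : ℝ)) * ∑ u ∈ S, ((sphere G u i).card : ℝ)

/-- The mean over the rows indexed by `S` of the sum of the squares of the entries of `M` at pairs
of vertices not at distance `i`. -/
noncomputable def meanSqOffDist {V : Type*} [Fintype V] (G : SimpleGraph V) (S : Finset V) (i : ℕ)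
    (M : Matrix V V ℝ) : ℝ :=
  (∑ u ∈ S, ∑ v with G.dist u v ≠ i, M u v ^ 2) / S.card

theorem meanSqOffDist_nonneg {V : Type*} [Fintype V] (G : SimpleGraph V) (S : Finset V) (i : ℕ)
    (M : Matrix V V ℝ) : 0 ≤ meanSqOffDist G S i M :=
  div_nonneg (sum_nonneg fun _ _ => sum_nonneg fun _ _ => sq_nonneg _) (Nat.cast_nonneg _)

theorem meanSqOffDist_eq_zero_iff {V : Type*} [Fintype V] {G : SimpleGraph V} {S : Finset V}
    {i : ℕ} {M : Matrix V V ℝ} :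
    meanSqOffDist G S i M = 0 ↔ IsSupportedAtDist G S i M := by
  obtain rfl | hS := S.eq_empty_or_nonempty
  · simp [meanSqOffDist, IsSupportedAtDist]
  · have hrow : ∀ u ∈ S, 0 ≤ ∑ v with G.dist u v ≠ i, M u v ^ 2 := fun u _ =>
      sum_nonneg fun v _ => sq_nonneg (M u v)
    rw [meanSqOffDist, div_eq_zero_iff, or_iff_left (Nat.cast_ne_zero.2 hS.card_pos.ne'),
      sum_eq_zero_iff_of_nonneg hrow]
    refine forall₂_congr fun u _ => ?_
    rw [sum_eq_zero_iff_of_nonneg fun v _ => sq_nonneg (M u v)]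
    simp only [mem_filter_univ, sq_eq_zero_iff]

section SpectralExcess

variable {V : Type*} [Fintype V] [DecidableEq V] {G : SimpleGraph V} [DecidableRel G.Adj]
  {S : Finset V} {d : ℕ} {lam : ℕ → ℝ} {E : ℕ → Matrix V V ℝ} {p : ℕ → ℝ[X]} {κ : ℕ → ℝ}

namespace IsPredistanceSeq

theorem isSupportedAtDist_of_isDistInvariantOn
    (hp : IsPredistanceSeq d lam (meanLocalMult E S) p)
    (h : IsSpectralResolution (G.adjMatrix ℝ) d lam E) (hconn : G.Connected) {i : ℕ} (hi : i ≤ d)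
    (hinv : IsDistInvariantOn G S (aeval (G.adjMatrix ℝ) (p i))) :
    IsSupportedAtDist G S i (aeval (G.adjMatrix ℝ) (p i)) := by
  have hlow : ∀ j < i, ∀ u ∈ S, ∀ v, G.dist u v = j → aeval (G.adjMatrix ℝ) (p i) u v = 0 := by
    intro j
    induction j using Nat.strong_induction_on with
    | _ j ih =>
      intro hji u hu v huv
      have hX : (X ^ j : ℝ[X]).degree < i := by
        rw [degree_X_pow]
        exact_mod_cast hji
      have horth := h.sum_aeval_mul_aeval S (p i) (X ^ j)
      rw [hp.discInner_eq_zero_of_degree_lt hi hX, mul_zero, aeval_X_pow] at horth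
      exact hinv.eq_zero_of_sum_mul_pow_eq_zero hconn
        (fun x hx y hxy => ih _ hxy (hxy.trans hji) x hx y rfl) horth hu huv
  intro u hu v huv
  obtain hlt | hgt := huv.lt_or_gt
  · exact hlow _ hlt u hu v rfl
  · refine aeval_adjMatrix_apply_eq_zero_of_degree_lt_dist ?_
    rw [hp.degree_eq i hi]
    exact_mod_cast hgt

/-- At a vertex `v` with `dist u v < i` the matrix `p_{i+1}(A) A` vanishes, while in its expansion
in the `p_j(A)` orthogonality removes the terms with `j < i` and the hypothesis those with
`j > i`. -/
theorem isSupportedAtDist_of_forall_gt (hp : IsPredistanceSeq d lam (meanLocalMult E S) p)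
    (h : IsSpectralResolution (G.adjMatrix ℝ) d lam E) {i : ℕ} (hi : i < d)
    (hgt : ∀ j, i < j → j ≤ d → IsSupportedAtDist G S j (aeval (G.adjMatrix ℝ) (p j))) :
    IsSupportedAtDist G S i (aeval (G.adjMatrix ℝ) (p i)) := by
  intro u hu v huv
  obtain hlt | hfar := huv.lt_or_gt
  swap
  · refine aeval_adjMatrix_apply_eq_zero_of_degree_lt_dist ?_
    rw [hp.degree_eq i hi.le]
    exact_mod_cast hfar
  have hnbr : aeval (G.adjMatrix ℝ) (X * p (i + 1)) u v = 0 := by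
    rw [X_mul, map_mul, aeval_X, SimpleGraph.mul_adjMatrix_apply]
    refine sum_eq_zero fun w hw => hgt (i + 1) i.lt_succ_self hi u hu w ?_
    have := ((G.mem_neighborFinset v w).1 hw).diff_dist_adj (u := u)
    omega
  have hcoeff_lt : ∀ j < i,
      discInner (range (d + 1)) lam (meanLocalMult E S) (p j) (X * p (i + 1)) = 0 := fun j hj => by
    rw [discInner_X_mul_right, discInner_comm]
    refine hp.discInner_eq_zero_of_degree_lt hi ?_
    rw [hp.degree_X_mul (hj.le.trans hi.le)]
    exact_mod_cast Nat.succ_lt_succ hj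
  have hcoeff_self :
      discInner (range (d + 1)) lam (meanLocalMult E S) (p i) (X * p (i + 1)) ≠ 0 := by
    rw [discInner_X_mul_right, discInner_comm]
    exact hp.discInner_ne_zero_of_degree_eq hi (hp.degree_X_mul hi.le)
  rw [h.aeval_eq_sum_discInner_div hp, Matrix.sum_apply,
    sum_eq_single_of_mem i (mem_range.2 (by omega))] at hnbr
  · rw [Matrix.smul_apply, smul_eq_zero] at hnbr
    exact hnbr.resolve_left (div_ne_zero hcoeff_self (hp.discInner_self_pos hi.le).ne')
  · intro j hj hji
    obtain hlt' | hgt' := hji.lt_or_gt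
    · rw [hcoeff_lt j hlt', zero_div, zero_smul, Matrix.zero_apply]
    · rw [Matrix.smul_apply,
        hgt j hgt' (mem_range_succ_iff.1 hj) u hu v (hlt.trans hgt').ne, smul_zero]

theorem isSupportedAtDist_of_le (hp : IsPredistanceSeq d lam (meanLocalMult E S) p)
    (h : IsSpectralResolution (G.adjMatrix ℝ) d lam E)
    (hsupp : IsSupportedAtDist G S d (aeval (G.adjMatrix ℝ) (p d))) {i : ℕ} (hi : i ≤ d) :
    IsSupportedAtDist G S i (aeval (G.adjMatrix ℝ) (p i)) := by
  induction hm : d - i using Nat.strong_induction_on generalizing i with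
  | _ m ih =>
    obtain rfl | hlt := hi.eq_or_lt
    · exact hsupp
    · exact hp.isSupportedAtDist_of_forall_gt h hlt fun j hij hj => ih (d - j) (by omega) hj rfl

end IsPredistanceSeq

theorem aeval_apply_eq_ite_of_isSupportedAtDist
    (hκ : ∀ u ∈ S, ∀ v, aeval (G.adjMatrix ℝ) (∑ j ∈ range (d + 1), p j) u v = κ (G.dist u v))
    (hsupp : ∀ i ≤ d, IsSupportedAtDist G S i (aeval (G.adjMatrix ℝ) (p i))) {i : ℕ} (hi : i ≤ d)
    {u : V} (hu : u ∈ S) (v : V) :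
    aeval (G.adjMatrix ℝ) (p i) u v = if G.dist u v = i then κ i else 0 := by
  split_ifs with huv
  · rw [← huv, ← hκ u hu v, huv, map_sum, Matrix.sum_apply,
      sum_eq_single_of_mem i (mem_range_succ_iff.2 hi)]
    exact fun j hj hji => hsupp j (mem_range_succ_iff.1 hj) u hu v (huv ▸ hji.symm)
  · exact hsupp i hi u hu v huv

theorem dist_le_of_isSupportedAtDist (hκ0 : ∀ i, κ i ≠ 0)
    (hκ : ∀ u ∈ S, ∀ v, aeval (G.adjMatrix ℝ) (∑ j ∈ range (d + 1), p j) u v = κ (G.dist u v))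
    (hsupp : ∀ i ≤ d, IsSupportedAtDist G S i (aeval (G.adjMatrix ℝ) (p i))) {u : V} (hu : u ∈ S)
    (v : V) : G.dist u v ≤ d := by
  by_contra! hlt
  refine hκ0 (G.dist u v) ?_
  rw [← hκ u hu v, map_sum, Matrix.sum_apply]
  refine sum_eq_zero fun j hj => ?_
  have hj' := mem_range_succ_iff.1 hj
  exact hsupp j hj' u hu v (hj'.trans_lt hlt).ne'

theorem IsPredistanceSeq.isDistInvariantOn_aeval
    (hp : IsPredistanceSeq d lam (meanLocalMult E S) p)
    (h : IsSpectralResolution (G.adjMatrix ℝ) d lam E)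
    (hinv : ∀ j ≤ d, IsDistInvariantOn G S (aeval (G.adjMatrix ℝ) (p j))) (f : ℝ[X]) :
    IsDistInvariantOn G S (aeval (G.adjMatrix ℝ) f) := by
  choose! F hF using hinv
  refine ⟨fun k => ∑ j ∈ range (d + 1),
    discInner (range (d + 1)) lam (meanLocalMult E S) (p j) f /
      discInner (range (d + 1)) lam (meanLocalMult E S) (p j) (p j) * F j k, fun u hu v => ?_⟩
  rw [h.aeval_eq_sum_discInner_div hp, Matrix.sum_apply]
  exact sum_congr rfl fun j hj => by
    rw [Matrix.smul_apply, hF j (mem_range_succ_iff.1 hj) u hu v, smul_eq_mul]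

theorem IsPredistanceSeq.isDistRegularAround_of_isSupportedAtDist
    (hp : IsPredistanceSeq d lam (meanLocalMult E S) p)
    (h : IsSpectralResolution (G.adjMatrix ℝ) d lam E) (hκ0 : ∀ i, κ i ≠ 0)
    (hκ : ∀ u ∈ S, ∀ v, aeval (G.adjMatrix ℝ) (∑ j ∈ range (d + 1), p j) u v = κ (G.dist u v))
    (hsupp : IsSupportedAtDist G S d (aeval (G.adjMatrix ℝ) (p d))) :
    IsDistRegularAround G S := by
  have hsupp' := fun i hi => hp.isSupportedAtDist_of_le h hsupp (i := i) hi
  have happly : ∀ i ≤ d, ∀ u ∈ S, ∀ v,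
      aeval (G.adjMatrix ℝ) (p i) u v = if G.dist u v = i then κ i else 0 := fun i hi u hu v =>
    aeval_apply_eq_ite_of_isSupportedAtDist hκ hsupp' hi hu v
  have hinv : ∀ i ≤ d, IsDistInvariantOn G S (aeval (G.adjMatrix ℝ) (p i)) := fun i hi =>
    ⟨fun k => if k = i then κ i else 0, happly i hi⟩
  choose F hF using fun i => hp.isDistInvariantOn_aeval h hinv (X * p i)
  have hcount : ∀ i, ∀ u ∈ S, ∀ v, #(sphere G u i ∩ G.neighborFinset v) =
      if i ≤ d then ⌊F i (G.dist u v) / κ i⌋₊ else 0 := by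
    intro i u hu v
    split_ifs with hi
    · have hsum : F i (G.dist u v) = #(sphere G u i ∩ G.neighborFinset v) * κ i := by
        rw [← hF i u hu v, X_mul, map_mul, aeval_X, SimpleGraph.mul_adjMatrix_apply,
          sum_congr rfl fun w _ => happly i hi u hu w, ← sum_filter, sum_const, nsmul_eq_mul,
          inter_comm, sphere, inter_filter, inter_univ]
      rw [hsum, mul_div_cancel_right₀ _ (hκ0 i), Nat.floor_natCast]
    · have hempty : sphere G u i = ∅ := filter_eq_empty_iff.2 fun w _ hw =>
        hi (hw ▸ dist_le_of_isSupportedAtDist hκ0 hκ hsupp' hu w)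
      rw [hempty, empty_inter, card_empty]
  let count (i k : ℕ) : ℕ := if i ≤ d then ⌊F i k / κ i⌋₊ else 0
  exact ⟨fun k => count (k - 1) k, fun k => count (k + 1) k, fun u hu v =>
    ⟨hcount _ u hu v, hcount _ u hu v⟩⟩

theorem aeval_apply_of_dist_eq (hp : IsPredistanceSeq d lam (meanLocalMult E S) p)
    (hκ : ∀ u ∈ S, ∀ v, aeval (G.adjMatrix ℝ) (∑ j ∈ range (d + 1), p j) u v = κ (G.dist u v))
    {u v : V} (hu : u ∈ S) (huv : G.dist u v = d) : aeval (G.adjMatrix ℝ) (p d) u v = κ d := by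
  rw [← huv, ← hκ u hu v, huv, sum_range_succ, map_add, Matrix.add_apply, map_sum,
    Matrix.sum_apply, sum_eq_zero, zero_add]
  intro j hj
  have hjd := mem_range.1 hj
  refine aeval_adjMatrix_apply_eq_zero_of_degree_lt_dist ?_
  rw [hp.degree_eq j hjd.le, huv]
  exact_mod_cast hjd

theorem sq_mul_meanSphereCard_add_meanSqOffDist
    (hp : IsPredistanceSeq d lam (meanLocalMult E S) p)
    (h : IsSpectralResolution (G.adjMatrix ℝ) d lam E)
    (hκ : ∀ u ∈ S, ∀ v, aeval (G.adjMatrix ℝ) (∑ j ∈ range (d + 1), p j) u v = κ (G.dist u v)) :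
    κ d ^ 2 * meanSphereCard G S d + meanSqOffDist G S d (aeval (G.adjMatrix ℝ) (p d)) =
      (p d).eval (lam 0) := by
  have hcard : (S.card : ℝ) ≠ 0 := Nat.cast_ne_zero.2
    (nonempty_of_meanLocalMult_pos (hp.weight_pos 0 (mem_range.2 d.succ_pos))).card_pos.ne'
  have hrow : ∀ u ∈ S, ∑ v, aeval (G.adjMatrix ℝ) (p d) u v * aeval (G.adjMatrix ℝ) (p d) u v =
      κ d ^ 2 * #(sphere G u d) +
        ∑ v with G.dist u v ≠ d, aeval (G.adjMatrix ℝ) (p d) u v ^ 2 := fun u hu => by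
    simp_rw [← sq]
    rw [← sum_filter_add_sum_filter_not univ (fun v => G.dist u v = d), mul_comm, ← nsmul_eq_mul,
      sphere, ← sum_const]
    congr 1
    exact sum_congr rfl fun v hv => by rw [aeval_apply_of_dist_eq hp hκ hu (mem_filter.1 hv).2]
  have hsum := h.sum_aeval_mul_aeval S (p d) (p d)
  rw [hp.norm_sq d le_rfl, sum_congr rfl hrow, sum_add_distrib, ← mul_sum] at hsum
  rw [meanSphereCard, meanSqOffDist]
  field_simp
  exact hsum

end SpectralExcess

/-! ### Semiregular bipartite graphs -/

/-- `G` is `(δ, ε)`-semiregular bipartite with stable sets `S` and `T`. -/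
structure IsSemiregularBipartition {V : Type*} [Fintype V] (G : SimpleGraph V)
    [DecidableRel G.Adj] (S T : Finset V) (δ ε : ℕ) : Prop where
  isCompl : IsCompl S T
  isBipartiteWith : G.IsBipartiteWith S T
  degree_left : ∀ u ∈ S, G.degree u = δ
  degree_right : ∀ v ∈ T, G.degree v = ε

/-- The ratio `ν v / ν u` of the entries of the Perron vector `ν w = √(deg w)` of a semiregular
bipartite graph, for vertices `u` of degree `δ` and `v` at distance `i` from `u`, where `ε` is the
degree of the vertices in the other stable set. -/
noncomputable def perronRatio (δ ε i : ℕ) : ℝ :=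
  if Even i then 1 else √ε / √δ

theorem perronRatio_ne_zero {δ ε : ℕ} (hδ : 0 < δ) (hε : 0 < ε) (i : ℕ) :
    perronRatio δ ε i ≠ 0 := by
  unfold perronRatio
  split_ifs <;> positivity

theorem even_dist_iff_mem_iff_mem {V : Type*} {G : SimpleGraph V} {S T : Set V}
    (hconn : G.Connected) (hG : G.IsBipartiteWith S T) (u v : V) :
    Even (G.dist u v) ↔ (u ∈ S ↔ v ∈ S) := by
  classical
  let c : G.Coloring Bool := .mk (fun x => decide (x ∈ S)) fun {x y} hxy heq => by
    have hmem : x ∈ S ↔ y ∈ S := decide_eq_decide.1 heq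
    obtain ⟨hx, hy⟩ | ⟨hx, hy⟩ := hG.mem_of_adj hxy
    · exact Set.disjoint_left.1 hG.disjoint (hmem.1 hx) hy
    · exact Set.disjoint_left.1 hG.disjoint (hmem.2 hy) hx
  obtain ⟨q, hq⟩ := hconn.exists_walk_length_eq_dist u v
  rw [← hq, c.even_length_iff_congr q]
  simp only [c, SimpleGraph.Coloring.mk, RelHom.coeFn_mk, decide_eq_true_eq]

theorem isBipartiteWith_of_stable {V : Type*} [Fintype V] [DecidableEq V] {G : SimpleGraph V}
    {S T : Finset V} (hcover : S ∪ T = univ) (hdisj : Disjoint S T)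
    (hS : ∀ u ∈ S, ∀ v ∈ S, ¬ G.Adj u v) (hT : ∀ u ∈ T, ∀ v ∈ T, ¬ G.Adj u v) :
    G.IsBipartiteWith S T where
  disjoint := disjoint_coe.2 hdisj
  mem_of_adj u v huv := by
    have hcover' : ∀ x, x ∈ S ∨ x ∈ T := fun x => mem_union.1 (hcover ▸ mem_univ x)
    obtain hu | hu := hcover' u
    · exact .inl ⟨hu, (hcover' v).resolve_left fun hv => hS u hu v hv huv⟩
    · exact .inr ⟨hu, (hcover' v).resolve_right fun hv => hT u hu v hv huv⟩

section Bipartite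

variable {V : Type*} [Fintype V] {G : SimpleGraph V} [DecidableRel G.Adj] {S T : Finset V}

namespace IsSemiregularBipartition

variable {δ ε : ℕ}

theorem symm (hB : IsSemiregularBipartition G S T δ ε) : IsSemiregularBipartition G T S ε δ :=
  ⟨hB.isCompl.symm, hB.isBipartiteWith.symm, hB.degree_right, hB.degree_left⟩

theorem mem_right_iff (hB : IsSemiregularBipartition G S T δ ε) {v : V} : v ∈ T ↔ v ∉ S := by
  classical
  rw [← hB.isCompl.compl_eq, mem_compl]

theorem pos_left (hB : IsSemiregularBipartition G S T δ ε) (hconn : G.Connected)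
    (hS : S.Nonempty) (hT : T.Nonempty) : 0 < δ := by
  obtain ⟨u, hu⟩ := hS
  obtain ⟨v, hv⟩ := hT
  have : Nontrivial V := ⟨u, v, fun huv => hB.mem_right_iff.1 hv (huv ▸ hu)⟩
  rw [← hB.degree_left u hu]
  exact hconn.preconnected.degree_pos_of_nontrivial u

theorem degree_mul_degree (hB : IsSemiregularBipartition G S T δ ε) {u v : V} (huv : G.Adj u v) :
    G.degree u * G.degree v = δ * ε := by
  obtain ⟨hu, hv⟩ | ⟨hu, hv⟩ := hB.isBipartiteWith.mem_of_adj huv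
  · rw [hB.degree_left u hu, hB.degree_right v hv]
  · rw [hB.degree_right u hu, hB.degree_left v hv, mul_comm]

theorem degree_pos (hB : IsSemiregularBipartition G S T δ ε) (hδ : 0 < δ) (hε : 0 < ε) (v : V) :
    0 < G.degree v := by
  by_cases hv : v ∈ S
  · rwa [hB.degree_left v hv]
  · rwa [hB.degree_right v (hB.mem_right_iff.2 hv)]

end IsSemiregularBipartition

theorem mul_sum_diag_eq_sum_adjMatrix_mul {M : Matrix V V ℝ} {μ : ℝ}
    (hST : IsCompl S T) (hG : G.IsBipartiteWith S T) (hM : G.adjMatrix ℝ * M = μ • M) :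
    μ * ∑ u ∈ S, M u u = ∑ u ∈ S, ∑ v ∈ T, G.adjMatrix ℝ u v * M v u := by
  classical
  rw [mul_sum]
  refine sum_congr rfl fun u hu => ?_
  have hstable : ∑ v ∈ S, G.adjMatrix ℝ u v * M v u = 0 := sum_eq_zero fun v hv => by
    rw [SimpleGraph.adjMatrix_apply, if_neg fun huv =>
      Set.disjoint_left.1 hG.disjoint hv (hG.mem_of_mem_adj hu huv), zero_mul]
  rw [← smul_eq_mul, ← Matrix.smul_apply, ← hM, mul_apply, ← hST.sum_add_sum, hstable, zero_add]

theorem sum_diag_left_eq_sum_diag_right {M : Matrix V V ℝ} {μ : ℝ} (hST : IsCompl S T)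
    (hG : G.IsBipartiteWith S T) (hM : G.adjMatrix ℝ * M = μ • M) (hsymm : M.IsSymm)
    (hμ : μ ≠ 0) : ∑ u ∈ S, M u u = ∑ v ∈ T, M v v := by
  classical
  refine mul_left_cancel₀ hμ ?_
  rw [mul_sum_diag_eq_sum_adjMatrix_mul hST hG hM,
    mul_sum_diag_eq_sum_adjMatrix_mul hST.symm hG.symm hM, sum_comm]
  exact sum_congr rfl fun v _ => sum_congr rfl fun u _ => by
    rw [hsymm.apply, G.isSymm_adjMatrix.apply]

variable [DecidableEq V] {d : ℕ} {lam : ℕ → ℝ} {E : ℕ → Matrix V V ℝ}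

namespace IsSpectralResolution

theorem sum_diag_pos_of_ne_zero (h : IsSpectralResolution (G.adjMatrix ℝ) d lam E)
    (hST : IsCompl S T) (hG : G.IsBipartiteWith S T) {i : ℕ} (hi : i ≤ d) (h0 : lam i ≠ 0) :
    0 < ∑ u ∈ S, E i u u := by
  have htrace : (E i).trace = ∑ u ∈ S, E i u u + ∑ v ∈ T, E i v v := (hST.sum_add_sum _).symm
  have hpos := h.trace_pos hi
  rw [htrace, ← sum_diag_left_eq_sum_diag_right hST hG (h.mul_idempotent i hi) (h.isSymm i hi) h0]
    at hpos
  linarith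

theorem card_sub_card_eq (h : IsSpectralResolution (G.adjMatrix ℝ) d lam E)
    (hST : IsCompl S T) (hG : G.IsBipartiteWith S T) {i : ℕ} (hi : i ≤ d) (h0 : lam i = 0) :
    (S.card : ℝ) - T.card = ∑ u ∈ S, E i u u - ∑ v ∈ T, E i v v := by
  have hcard : ∀ W : Finset V, (W.card : ℝ) = ∑ j ∈ range (d + 1), ∑ u ∈ W, E j u u := fun W => by
    simp_rw [sum_comm (s := range (d + 1)), ← Matrix.sum_apply, h.sum_eq_one, one_apply_eq,
      sum_const, nsmul_eq_mul, mul_one]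
  rw [hcard, hcard, ← sum_sub_distrib, sum_eq_single_of_mem i (mem_range_succ_iff.2 hi)]
  intro j hj hji
  have hj' := mem_range_succ_iff.1 hj
  exact sub_eq_zero.2 (sum_diag_left_eq_sum_diag_right hST hG (h.mul_idempotent j hj')
    (h.isSymm j hj') fun hj0 => hji (h.strictAntiOn.injOn hj' hi (hj0.trans h0.symm)))

theorem meanLocalMult_pos (h : IsSpectralResolution (G.adjMatrix ℝ) d lam E)
    (hST : IsCompl S T) (hG : G.IsBipartiteWith S T)
    (hm0 : ∑ i ∈ range (d + 1) with lam i = 0, (E i).trace ≠ |(S.card : ℝ) - T.card|) {i : ℕ}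
    (hi : i ≤ d) : 0 < meanLocalMult E S i := by
  suffices hsum : 0 < ∑ u ∈ S, E i u u from
    div_pos hsum (Nat.cast_pos.2 (nonempty_of_sum_ne_zero hsum.ne').card_pos)
  by_cases h0 : lam i = 0
  · refine (sum_nonneg fun u _ => h.diag_nonneg hi u).lt_of_ne' fun hzero => hm0 ?_
    have hfilter : (range (d + 1)).filter (fun j => lam j = 0) = {i} := by
      ext j
      rw [mem_filter, mem_range_succ_iff, mem_singleton]
      exact ⟨fun hj => h.strictAntiOn.injOn hj.1 hi (hj.2.trans h0.symm), fun hj => hj ▸ ⟨hi, h0⟩⟩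
    have htrace : (E i).trace = ∑ v ∈ T, E i v v := by
      rw [trace, ← hST.sum_add_sum]
      simp only [diag_apply, hzero, zero_add]
    rw [hfilter, sum_singleton, h.card_sub_card_eq hST hG hi h0, hzero, ← htrace, zero_sub,
      abs_neg, abs_of_pos (h.trace_pos hi)]
  · exact h.sum_diag_pos_of_ne_zero hST hG hi h0

end IsSpectralResolution

namespace IsSemiregularBipartition

variable {δ ε : ℕ} {p : ℕ → ℝ[X]}

theorem aeval_sum_predistance_apply (hB : IsSemiregularBipartition G S T δ ε)
    (hconn : G.Connected) (hδ : 0 < δ) (hε : 0 < ε)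
    (h : IsSpectralResolution (G.adjMatrix ℝ) d lam E)
    (hp : IsPredistanceSeq d lam (meanLocalMult E S) p) :
    ∀ u ∈ S, ∀ v, aeval (G.adjMatrix ℝ) (∑ j ∈ range (d + 1), p j) u v =
      perronRatio δ ε (G.dist u v) := by
  intro u hu v
  have hconst : ∀ x ∈ S, ∀ y ∈ S, √(G.degree x : ℝ) = √(G.degree y : ℝ) := fun x hx y hy => by
    rw [hB.degree_left x hx, hB.degree_left y hy]
  have hpos : ∀ x, 0 < √(G.degree x : ℝ) := fun x =>
    Real.sqrt_pos.2 (Nat.cast_pos.2 (hB.degree_pos hδ hε x))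
  rw [h.aeval_sum_predistance_apply hconn
    (adjMatrix_mulVec_sqrt_degree fun _ _ => hB.degree_mul_degree) hpos hp hconst hu v]
  have heven : Even (G.dist u v) ↔ v ∈ S := by
    rw [even_dist_iff_mem_iff_mem hconn hB.isBipartiteWith, mem_coe, mem_coe, iff_true_left hu]
  simp only [perronRatio, heven]
  split_ifs with hv
  · rw [hconst u hu v hv, div_self (hpos v).ne']
  · rw [hB.degree_left u hu, hB.degree_right v (hB.mem_right_iff.2 hv)]

theorem meanSphereCard_add_meanSqOffDist (hB : IsSemiregularBipartition G S T δ ε)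
    (hconn : G.Connected) (hδ : 0 < δ) (hε : 0 < ε)
    (h : IsSpectralResolution (G.adjMatrix ℝ) d lam E)
    (hp : IsPredistanceSeq d lam (meanLocalMult E S) p) (hd : Even d) :
    meanSphereCard G S d + meanSqOffDist G S d (aeval (G.adjMatrix ℝ) (p d)) =
      (p d).eval (lam 0) := by
  have := sq_mul_meanSphereCard_add_meanSqOffDist hp h
    (hB.aeval_sum_predistance_apply hconn hδ hε h hp)
  rwa [perronRatio, if_pos hd, one_pow, one_mul] at this

theorem meanSphereCard_le (hB : IsSemiregularBipartition G S T δ ε)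
    (hconn : G.Connected) (hδ : 0 < δ) (hε : 0 < ε)
    (h : IsSpectralResolution (G.adjMatrix ℝ) d lam E)
    (hp : IsPredistanceSeq d lam (meanLocalMult E S) p) (hd : Even d) :
    meanSphereCard G S d ≤ (p d).eval (lam 0) := by
  rw [← hB.meanSphereCard_add_meanSqOffDist hconn hδ hε h hp hd]
  exact le_add_of_nonneg_right (meanSqOffDist_nonneg G S d _)

theorem isDistRegularAround_iff (hB : IsSemiregularBipartition G S T δ ε)
    (hconn : G.Connected) (hδ : 0 < δ) (hε : 0 < ε)
    (h : IsSpectralResolution (G.adjMatrix ℝ) d lam E)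
    (hp : IsPredistanceSeq d lam (meanLocalMult E S) p) (hd : Even d) :
    IsDistRegularAround G S ↔ meanSphereCard G S d = (p d).eval (lam 0) := by
  rw [← hB.meanSphereCard_add_meanSqOffDist hconn hδ hε h hp hd, left_eq_add,
    meanSqOffDist_eq_zero_iff]
  refine ⟨fun hreg => hp.isSupportedAtDist_of_isDistInvariantOn h hconn le_rfl
    (hreg.isDistInvariantOn_aeval hconn hB.isBipartiteWith.isBipartite _),
    hp.isDistRegularAround_of_isSupportedAtDist h (perronRatio_ne_zero hδ hε)
      (hB.aeval_sum_predistance_apply hconn hδ hε h hp)⟩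

end IsSemiregularBipartition

end Bipartite

/-- Final observation: in case (b), the two conditions can be added up into the single
condition `k̄_{1,d} + k̄_{2,d} = p_{1,d}(λ_0) + p_{2,d}(λ_0)`, which still
characterizes distance-biregularity. -/
theorem stmt_17 {V : Type*} [Fintype V] [DecidableEq V]
    (G : SimpleGraph V) [DecidableRel G.Adj] (hconn : G.Connected)
    (V1 V2 : Finset V) (hcover : V1 ∪ V2 = Finset.univ) (hdisj : Disjoint V1 V2)
    (hind1 : ∀ u ∈ V1, ∀ v ∈ V1, ¬ G.Adj u v)
    (hind2 : ∀ u ∈ V2, ∀ v ∈ V2, ¬ G.Adj u v)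
    (δ1 δ2 : ℕ)
    (hdeg1 : ∀ u ∈ V1, G.degree u = δ1) (hdeg2 : ∀ v ∈ V2, G.degree v = δ2)
    (d : ℕ) (lam : ℕ → ℝ) (hlam : StrictAntiOn lam (Set.Iic d))
    (E : ℕ → Matrix V V ℝ)
    (hsym : ∀ i ≤ d, (E i).IsSymm)
    (hsum : ∑ i ∈ Finset.range (d + 1), E i = 1)
    (hmul : ∀ i ≤ d, ∀ j ≤ d, E i * E j = if i = j then E i else 0)
    (heig : ∀ i ≤ d, G.adjMatrix ℝ * E i = lam i • E i)
    (hnz : ∀ i ≤ d, E i ≠ 0)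
    (hEven : Even d)
    -- `m(0) ≠ |n₁ − n₂|`
    (hm0 : ∑ i ∈ (Finset.range (d + 1)).filter (fun i => lam i = 0),
        Matrix.trace (E i) ≠ |(V1.card : ℝ) - (V2.card : ℝ)|)
    -- the orthogonal polynomials for `⟨·,·⟩_{V₁}`, with weights `w_{1,i}`
    (p1 : ℕ → Polynomial ℝ)
    (hp1deg : ∀ i ≤ d, (p1 i).degree = (i : WithBot ℕ))
    (hp1orth : ∀ i ≤ d, ∀ j ≤ d, i ≠ j →
      discInner (Finset.range (d + 1)) lam
        (fun i => (∑ u ∈ V1, E i u u) / (V1.card : ℝ)) (p1 i) (p1 j) = 0)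
    (hp1norm : ∀ i ≤ d,
      discInner (Finset.range (d + 1)) lam
          (fun i => (∑ u ∈ V1, E i u u) / (V1.card : ℝ)) (p1 i) (p1 i)
        = (p1 i).eval (lam 0))
    -- the orthogonal polynomials for `⟨·,·⟩_{V₂}`, with weights `w_{2,i}`
    (p2 : ℕ → Polynomial ℝ)
    (hp2deg : ∀ i ≤ d, (p2 i).degree = (i : WithBot ℕ))
    (hp2orth : ∀ i ≤ d, ∀ j ≤ d, i ≠ j →
      discInner (Finset.range (d + 1)) lam
        (fun i => (∑ v ∈ V2, E i v v) / (V2.card : ℝ)) (p2 i) (p2 j) = 0)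
    (hp2norm : ∀ i ≤ d,
      discInner (Finset.range (d + 1)) lam
          (fun i => (∑ v ∈ V2, E i v v) / (V2.card : ℝ)) (p2 i) (p2 i)
        = (p2 i).eval (lam 0)) :
    IsDistBiregularOn G V1 V2 ↔
      (1 / (V1.card : ℝ)) * (∑ u ∈ V1, ((sphere G u d).card : ℝ))
          + (1 / (V2.card : ℝ)) * (∑ v ∈ V2, ((sphere G v d).card : ℝ))
        = (p1 d).eval (lam 0) + (p2 d).eval (lam 0) := by
  have h : IsSpectralResolution (G.adjMatrix ℝ) d lam E := ⟨hlam, hsym, hsum, hmul, heig, hnz⟩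
  have hB : IsSemiregularBipartition G V1 V2 δ1 δ2 :=
    ⟨⟨hdisj, codisjoint_iff.2 hcover⟩, isBipartiteWith_of_stable hcover hdisj hind1 hind2,
      hdeg1, hdeg2⟩
  have hw1 : ∀ i ≤ d, 0 < meanLocalMult E V1 i := fun i hi =>
    h.meanLocalMult_pos hB.isCompl hB.isBipartiteWith hm0 hi
  have hw2 : ∀ i ≤ d, 0 < meanLocalMult E V2 i := fun i hi =>
    h.meanLocalMult_pos hB.symm.isCompl hB.symm.isBipartiteWith (abs_sub_comm (_ : ℝ) _ ▸ hm0) hi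
  have hp1 : IsPredistanceSeq d lam (meanLocalMult E V1) p1 :=
    ⟨h.injOn, fun i hi => hw1 i (mem_range_succ_iff.1 hi), hp1deg, hp1orth, hp1norm⟩
  have hp2 : IsPredistanceSeq d lam (meanLocalMult E V2) p2 :=
    ⟨h.injOn, fun i hi => hw2 i (mem_range_succ_iff.1 hi), hp2deg, hp2orth, hp2norm⟩
  have hV1 := nonempty_of_meanLocalMult_pos (hw1 0 d.zero_le)
  have hV2 := nonempty_of_meanLocalMult_pos (hw2 0 d.zero_le)
  have hδ1 := hB.pos_left hconn hV1 hV2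
  have hδ2 := hB.symm.pos_left hconn hV2 hV1
  rw [isDistBiregularOn_iff, hB.isDistRegularAround_iff hconn hδ1 hδ2 h hp1 hEven,
    hB.symm.isDistRegularAround_iff hconn hδ2 hδ1 h hp2 hEven]
  exact (add_eq_add_iff_eq_and_eq (hB.meanSphereCard_le hconn hδ1 hδ2 h hp1 hEven)
    (hB.symm.meanSphereCard_le hconn hδ2 hδ1 h hp2 hEven)).symm
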